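/- arXiv:1704.04932 — 3 statements merged into one kernel-verified Lean document; each statement's English description precedes it below -/
import Mathlib

section
/- Let n ≥ 1, β > 0, and let f : ℝⁿ → ℝ be continuous and bounded. Define the heat kernel G_s(x) = (2πs)^{−n/2} exp(−‖x‖²/(2s)) for s > 0, and define the local entropy function u(x,t) = −β⁻¹ log( ∫_{ℝⁿ} G_{β⁻¹ t}(x−y) exp(−β f(y)) dy ) for t > 0. Then u is smooth on ℝⁿ × (0,∞), solves the viscous Hamilton–Jacobi equation ∂u/∂t = −(1/2)‖∇u‖² + (β⁻¹/2)Δu there, and u(x,t) → f(x) as t → 0⁺ for every x ∈ ℝⁿ. -/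
open Real MeasureTheory

/-- The spatial Laplacian: sum of second derivatives along coordinate directions. -/
noncomputable def laplacian {n : ℕ} (f : EuclideanSpace ℝ (Fin n) → ℝ)
    (x : EuclideanSpace ℝ (Fin n)) : ℝ :=
  ∑ i : Fin n, fderiv ℝ (fun y => fderiv ℝ f y (EuclideanSpace.single i 1)) x
    (EuclideanSpace.single i 1)

/-- The heat kernel `G_s(x) = (2πs)^{-n/2} exp(-‖x‖²/(2s))`. -/
noncomputable def heatKernel {n : ℕ} (s : ℝ) (x : EuclideanSpace ℝ (Fin n)) : ℝ :=
  (2 * Real.pi * s) ^ (-(n : ℝ) / 2) * Real.exp (-‖x‖ ^ 2 / (2 * s))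

/-- The local entropy `u(x,t) = -β⁻¹ log( ∫ G_{β⁻¹ t}(x-y) exp(-β f(y)) dy )`. -/
noncomputable def localEntropy {n : ℕ} (β : ℝ) (f : EuclideanSpace ℝ (Fin n) → ℝ)
    (x : EuclideanSpace ℝ (Fin n)) (t : ℝ) : ℝ :=
  -β⁻¹ * Real.log (∫ y, heatKernel (β⁻¹ * t) (x - y) * Real.exp (-β * f y))

section Laplace

variable {n : ℕ}

/-- The linear form `(b, a) ↦ ⟨y, b⟩ - a ‖y‖²`. -/
noncomputable def ellForm (y : EuclideanSpace ℝ (Fin n)) :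
    (EuclideanSpace ℝ (Fin n) × ℝ) →L[ℝ] ℝ :=
  (innerSL ℝ y).comp (ContinuousLinearMap.fst ℝ _ _)
    - (‖y‖ ^ 2) • ContinuousLinearMap.snd ℝ _ _

lemma ellForm_apply (y : EuclideanSpace ℝ (Fin n)) (w : EuclideanSpace ℝ (Fin n) × ℝ) :
    ellForm y w = inner ℝ y w.1 - ‖y‖ ^ 2 * w.2 := by
  simp [ellForm]

lemma continuous_ellForm :
    Continuous (ellForm : EuclideanSpace ℝ (Fin n) → _) := by
  unfold ellForm
  fun_prop

lemma norm_ellForm_le (y : EuclideanSpace ℝ (Fin n)) : ‖ellForm y‖ ≤ 2 * Real.exp ‖y‖ := by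
  have h1 : ‖ellForm y‖ ≤ ‖y‖ + ‖y‖ ^ 2 := by
    refine ContinuousLinearMap.opNorm_le_bound _ (by positivity) fun w => ?_
    rw [ellForm_apply]
    have h2 : |inner ℝ y w.1| ≤ ‖y‖ * ‖w.1‖ := abs_real_inner_le_norm _ _
    have h3 : ‖w.1‖ ≤ ‖w‖ := norm_fst_le w
    have h4 : ‖w.2‖ ≤ ‖w‖ := norm_snd_le w
    calc ‖inner ℝ y w.1 - ‖y‖ ^ 2 * w.2‖ ≤ ‖inner ℝ y w.1‖ + ‖‖y‖ ^ 2 * w.2‖ := norm_sub_le _ _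
      _ ≤ ‖y‖ * ‖w‖ + ‖y‖ ^ 2 * ‖w‖ := by
        rw [norm_mul, norm_pow, norm_norm]
        have : ‖inner ℝ y w.1‖ ≤ ‖y‖ * ‖w.1‖ := h2
        gcongr
        exact this.trans (by gcongr)
      _ = _ := by ring
  have h5 := Real.quadratic_le_exp_of_nonneg (norm_nonneg y)
  nlinarith [norm_nonneg y]

lemma integrable_gauss {a : ℝ} (ha : 0 < a) :
    Integrable (fun y : EuclideanSpace ℝ (Fin n) => Real.exp (-a * ‖y‖ ^ 2)) := by
  have h := GaussianFourier.integrable_cexp_neg_mul_sq_norm_add (V := EuclideanSpace ℝ (Fin n))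
    (b := (a : ℂ)) (by simpa using ha) 0 0
  have h2 := h.re
  refine h2.congr (Filter.Eventually.of_forall fun y => ?_)
  simp only [zero_mul, add_zero]
  have : (-(a : ℂ) * (‖y‖ : ℂ) ^ 2) = ((-a * ‖y‖ ^ 2 : ℝ) : ℂ) := by push_cast; ring
  rw [this, ← Complex.ofReal_exp]
  exact Complex.ofReal_re _

lemma integrable_expbound {a : ℝ} (ha : 0 < a) (c : ℝ) :
    Integrable (fun y : EuclideanSpace ℝ (Fin n) => Real.exp (c * ‖y‖ - a * ‖y‖ ^ 2)) := by
  refine Integrable.mono' ((integrable_gauss (n := n) (half_pos ha)).const_mul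
    (Real.exp (c ^ 2 / (2 * a)))) (Continuous.aestronglyMeasurable (by fun_prop)) ?_
  refine Filter.Eventually.of_forall fun y => ?_
  rw [Real.norm_eq_abs, abs_of_pos (Real.exp_pos _), ← Real.exp_add]
  apply Real.exp_le_exp.2
  have : c ^ 2 / (2 * a) + -(a / 2) * ‖y‖ ^ 2 - (c * ‖y‖ - a * ‖y‖ ^ 2)
      = (c - a * ‖y‖) ^ 2 / (2 * a) := by
    field_simp; ring
  have h2 : 0 ≤ (c - a * ‖y‖) ^ 2 / (2 * a) := by positivity
  linarith

variable {F : Type} [NormedAddCommGroup F] [NormedSpace ℝ F]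

/-- Continuous functions with at most exponential growth. -/
def ExpGrowth (P : EuclideanSpace ℝ (Fin n) → F) : Prop :=
  Continuous P ∧ ∃ C c : ℝ, 0 ≤ C ∧ ∀ y, ‖P y‖ ≤ C * Real.exp (c * ‖y‖)

/-- Laplace-type transform. -/
noncomputable def lapT (P : EuclideanSpace ℝ (Fin n) → F) (w : EuclideanSpace ℝ (Fin n) × ℝ) : F :=
  ∫ y, Real.exp (ellForm y w) • P y

/-- The derivative density. -/
noncomputable def derP (P : EuclideanSpace ℝ (Fin n) → F) (y : EuclideanSpace ℝ (Fin n)) :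
    (EuclideanSpace ℝ (Fin n) × ℝ) →L[ℝ] F :=
  (ellForm y).smulRight (P y)

lemma ExpGrowth.derP {P : EuclideanSpace ℝ (Fin n) → F} (hP : ExpGrowth P) :
    ExpGrowth (derP P) := by
  obtain ⟨h1, C, c, hC, h2⟩ := hP
  refine ⟨?_, 2 * C, 1 + c, by positivity, fun y => ?_⟩
  · have := (ContinuousLinearMap.smulRightL ℝ (EuclideanSpace ℝ (Fin n) × ℝ) F).continuous₂.comp
      (continuous_ellForm.prodMk h1)
    exact this
  · unfold _root_.derP
    rw [ContinuousLinearMap.norm_smulRight_apply]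
    calc _ ≤ (2 * Real.exp ‖y‖) * (C * Real.exp (c * ‖y‖)) :=
          mul_le_mul (norm_ellForm_le y) (h2 y) (norm_nonneg _) (by positivity)
      _ = _ := by
        rw [show (1 + c) * ‖y‖ = ‖y‖ + c * ‖y‖ by ring, Real.exp_add]; ring

lemma exp_ell_bound {P : EuclideanSpace ℝ (Fin n) → F} {C c : ℝ}
    (h : ∀ y, ‖P y‖ ≤ C * Real.exp (c * ‖y‖)) {w : EuclideanSpace ℝ (Fin n) × ℝ} {B a : ℝ}
    (hB : ‖w.1‖ ≤ B) (ha : a ≤ w.2) (y : EuclideanSpace ℝ (Fin n)) :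
    ‖Real.exp (ellForm y w) • P y‖ ≤ C * Real.exp ((B + c) * ‖y‖ - a * ‖y‖ ^ 2) := by
  rw [norm_smul, Real.norm_eq_abs, abs_of_pos (Real.exp_pos _)]
  have h1 : ellForm y w ≤ B * ‖y‖ - a * ‖y‖ ^ 2 := by
    rw [ellForm_apply]
    have := real_inner_le_norm y w.1
    have h3 : ‖y‖ * ‖w.1‖ ≤ ‖y‖ * B := by gcongr
    have h4 : ‖y‖ ^ 2 * a ≤ ‖y‖ ^ 2 * w.2 := by gcongr
    linarith
  calc _ ≤ Real.exp (B * ‖y‖ - a * ‖y‖ ^ 2) * (C * Real.exp (c * ‖y‖)) :=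
        mul_le_mul (Real.exp_le_exp.2 h1) (h y) (norm_nonneg _) (Real.exp_pos _).le
    _ = _ := by
      rw [show (B + c) * ‖y‖ - a * ‖y‖ ^ 2 = (B * ‖y‖ - a * ‖y‖ ^ 2) + c * ‖y‖ by ring,
        Real.exp_add]; ring

lemma ExpGrowth.continuous_integrand {P : EuclideanSpace ℝ (Fin n) → F} (hP : ExpGrowth P)
    (w : EuclideanSpace ℝ (Fin n) × ℝ) :
    Continuous (fun y => Real.exp (ellForm y w) • P y) := by
  have := hP.1
  have h2 := continuous_ellForm (n := n)
  fun_prop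

lemma ExpGrowth.integrable {P : EuclideanSpace ℝ (Fin n) → F} (hP : ExpGrowth P)
    {w : EuclideanSpace ℝ (Fin n) × ℝ} (hw : 0 < w.2) :
    Integrable (fun y => Real.exp (ellForm y w) • P y) := by
  obtain ⟨h1, C, c, hC, h2⟩ := id hP
  exact Integrable.mono' ((integrable_expbound hw (‖w.1‖ + c)).const_mul C)
    (hP.continuous_integrand w).aestronglyMeasurable
    (Filter.Eventually.of_forall fun y => exp_ell_bound h2 le_rfl le_rfl y)

lemma ExpGrowth.hasFDerivAt {P : EuclideanSpace ℝ (Fin n) → F} (hP : ExpGrowth P)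
    {w : EuclideanSpace ℝ (Fin n) × ℝ} (hw : 0 < w.2) :
    HasFDerivAt (lapT P) (lapT (_root_.derP P) w) w := by
  have hP' := hP.derP
  obtain ⟨h1, C, c, hC, h2⟩ := id hP'
  have hs : {v : EuclideanSpace ℝ (Fin n) × ℝ | ‖v.1‖ < ‖w.1‖ + 1 ∧ w.2 / 2 < v.2} ∈ nhds w := by
    apply IsOpen.mem_nhds
    · exact (isOpen_lt (continuous_fst.norm) continuous_const).inter
        (isOpen_lt continuous_const continuous_snd)
    · constructor
      · simp
      · simpa using hw
  refine hasFDerivAt_integral_of_dominated_of_fderiv_le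
    (F' := fun v y => Real.exp (ellForm y v) • _root_.derP P y)
    (bound := fun y => C * Real.exp ((‖w.1‖ + 1 + c) * ‖y‖ - (w.2 / 2) * ‖y‖ ^ 2)) hs
    (Filter.Eventually.of_forall fun v => (hP.continuous_integrand v).aestronglyMeasurable)
    (hP.integrable hw) (hP'.continuous_integrand w).aestronglyMeasurable
    (Filter.Eventually.of_forall fun y v hv => exp_ell_bound h2 hv.1.le hv.2.le y)
    ((integrable_expbound (half_pos hw) _).const_mul C)
    (Filter.Eventually.of_forall fun y v hv => ?_)
  have h3 : HasFDerivAt (fun v => Real.exp (ellForm y v)) (Real.exp (ellForm y v) • ellForm y) v :=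
    (ellForm y).hasFDerivAt.exp
  have h4 := h3.smul_const (P y)
  convert h4 using 1
  refine ContinuousLinearMap.ext fun z => ?_
  simp [_root_.derP, smul_smul]

lemma ExpGrowth.fderiv_apply {P : EuclideanSpace ℝ (Fin n) → F} (hP : ExpGrowth P)
    {w : EuclideanSpace ℝ (Fin n) × ℝ} (hw : 0 < w.2) (v : EuclideanSpace ℝ (Fin n) × ℝ) :
    lapT (_root_.derP P) w v = lapT (fun y => ellForm y v • P y) w := by
  unfold lapT
  rw [ContinuousLinearMap.integral_apply (hP.derP.integrable hw)]
  rfl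

lemma isOpen_half : IsOpen {w : EuclideanSpace ℝ (Fin n) × ℝ | 0 < w.2} :=
  isOpen_lt (by fun_prop) (by fun_prop)

lemma contDiffOn_lapT_nat (k : ℕ) : ∀ {F : Type} [NormedAddCommGroup F] [NormedSpace ℝ F]
    {P : EuclideanSpace ℝ (Fin n) → F}, ExpGrowth P →
    ContDiffOn ℝ k (lapT P) {w | 0 < w.2} := by
  induction k with
  | zero =>
    intro F _ _ P hP
    exact contDiffOn_zero.2 fun w hw => (hP.hasFDerivAt hw).continuousAt.continuousWithinAt
  | succ k ih =>
    intro F _ _ P hP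
    push_cast
    rw [contDiffOn_succ_iff_fderiv_of_isOpen isOpen_half]
    refine ⟨fun w hw => (hP.hasFDerivAt hw).differentiableAt.differentiableWithinAt, by simp, ?_⟩
    exact (ih hP.derP).congr fun w hw => (hP.hasFDerivAt hw).fderiv

lemma contDiffOn_lapT {P : EuclideanSpace ℝ (Fin n) → F} (hP : ExpGrowth P) :
    ContDiffOn ℝ (⊤ : ℕ∞) (lapT P) {w | 0 < w.2} :=
  contDiffOn_infty.2 fun k => contDiffOn_lapT_nat k hP

end Laplace

section Entropy

variable {n : ℕ}

lemma ExpGrowth.coord {P : EuclideanSpace ℝ (Fin n) → ℝ} (hP : ExpGrowth P) (i : Fin n) :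
    ExpGrowth (fun y => y i * P y) := by
  obtain ⟨h1, C, c, hC, h2⟩ := hP
  refine ⟨by fun_prop, C, 1 + c, hC, fun y => ?_⟩
  rw [norm_mul]
  have h3 : ‖y i‖ ≤ Real.exp ‖y‖ := by
    have := PiLp.norm_apply_le y i
    have := Real.add_one_le_exp ‖y‖
    linarith
  calc _ ≤ Real.exp ‖y‖ * (C * Real.exp (c * ‖y‖)) :=
        mul_le_mul h3 (h2 y) (norm_nonneg _) (by positivity)
    _ = _ := by
      rw [show (1 + c) * ‖y‖ = ‖y‖ + c * ‖y‖ by ring, Real.exp_add]; ring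

lemma expGrowth_exp {β : ℝ} (hβ : 0 < β) {f : EuclideanSpace ℝ (Fin n) → ℝ} (hf : Continuous f)
    (hfb : ∃ M, ∀ x, |f x| ≤ M) : ExpGrowth (fun y => Real.exp (-β * f y)) := by
  obtain ⟨M, hM⟩ := hfb
  refine ⟨by fun_prop, Real.exp (β * M), 0, by positivity, fun y => ?_⟩
  rw [Real.norm_eq_abs, abs_of_pos (Real.exp_pos _)]
  simp only [zero_mul, Real.exp_zero, mul_one]
  apply Real.exp_le_exp.2
  have := neg_le_of_abs_le (hM y)
  nlinarith

lemma lapT_pos {P : EuclideanSpace ℝ (Fin n) → ℝ} (hP : ExpGrowth P) (hpos : ∀ y, 0 < P y)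
    {w : EuclideanSpace ℝ (Fin n) × ℝ} (hw : 0 < w.2) : 0 < lapT P w := by
  unfold lapT
  have hp : ∀ y, 0 < Real.exp (ellForm y w) • P y := fun y => by
    have := hpos y
    simp only [smul_eq_mul]; positivity
  rw [integral_pos_iff_support_of_nonneg (fun y => (hp y).le) (hP.integrable hw)]
  have : Function.support (fun y => Real.exp (ellForm y w) • P y) = Set.univ := by
    ext y; simpa [Function.mem_support] using (hpos y).ne'
  rw [this]
  exact isOpen_univ.measure_pos _ Set.univ_nonempty

/-- The spatial derivative of the rescaled transform. -/
lemma hasFDerivAt_lapT_space {P : EuclideanSpace ℝ (Fin n) → ℝ} (hP : ExpGrowth P)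
    (κ : ℝ) {a : ℝ} (ha : 0 < a) (x : EuclideanSpace ℝ (Fin n)) :
    ∃ L : EuclideanSpace ℝ (Fin n) →L[ℝ] ℝ,
      HasFDerivAt (fun x => lapT P (κ • x, a)) L x ∧
      ∀ i, L (EuclideanSpace.single i 1) = κ * lapT (fun y => y i * P y) (κ • x, a) := by
  have h1 : HasFDerivAt (fun x : EuclideanSpace ℝ (Fin n) => (κ • x, a))
      ((κ • ContinuousLinearMap.id ℝ (EuclideanSpace ℝ (Fin n))).prod 0) x :=
    ((hasFDerivAt_id x).const_smul κ).prodMk (hasFDerivAt_const a x)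
  have h0 := (hP.hasFDerivAt (w := (κ • x, a)) ha).comp x h1
  refine ⟨_, h0, fun i => ?_⟩
  have h2 : ((κ • ContinuousLinearMap.id ℝ (EuclideanSpace ℝ (Fin n))).prod
      (0 : EuclideanSpace ℝ (Fin n) →L[ℝ] ℝ)) (EuclideanSpace.single i 1)
      = (κ • ((EuclideanSpace.single i 1 : EuclideanSpace ℝ (Fin n)), (0 : ℝ))) := by
    ext <;> simp
  rw [ContinuousLinearMap.comp_apply, h2, map_smul, hP.fderiv_apply ha, smul_eq_mul]
  congr 2
  funext y
  simp [ellForm_apply, EuclideanSpace.inner_single_right]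

lemma lapT_curve {P : EuclideanSpace ℝ (Fin n) → ℝ} (hP : ExpGrowth P)
    {w : EuclideanSpace ℝ (Fin n) × ℝ} (hw : 0 < w.2) (c : ℝ) (x : EuclideanSpace ℝ (Fin n)) :
    lapT (derP P) w (c • x, c / 2) =
      ∑ i, (c * x i * lapT (fun y => y i * P y) w
        - c / 2 * lapT (fun y => y i * (y i * P y)) w) := by
  rw [hP.fderiv_apply hw]
  unfold lapT
  have hi1 : ∀ i, Integrable (fun y => Real.exp (ellForm y w) • (y i * P y)) :=
    fun i => (hP.coord i).integrable hw
  have hi2 : ∀ i, Integrable (fun y => Real.exp (ellForm y w) • (y i * (y i * P y))) :=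
    fun i => ((hP.coord i).coord i).integrable hw
  simp_rw [← integral_const_mul]
  simp_rw [← integral_sub ((hi1 _).const_mul _) ((hi2 _).const_mul _)]
  rw [← integral_finsetSum]
  · congr 1
    funext y
    have e : ellForm y (c • x, c / 2) = ∑ i, (c * x i * y i - c / 2 * (y i * y i)) := by
      rw [ellForm_apply, EuclideanSpace.norm_sq_eq, PiLp.inner_apply, Finset.sum_mul,
        ← Finset.sum_sub_distrib]
      refine Finset.sum_congr rfl fun i _ => ?_
      simp
      ring
    rw [e]
    simp only [smul_eq_mul]
    rw [Finset.sum_mul, Finset.mul_sum]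
    refine Finset.sum_congr rfl fun i _ => ?_
    ring
  · intro i _
    exact ((hi1 i).const_mul _).sub ((hi2 i).const_mul _)

lemma localEntropy_eq {β : ℝ} (hβ : 0 < β) {f : EuclideanSpace ℝ (Fin n) → ℝ} (hf : Continuous f)
    (hfb : ∃ M, ∀ x, |f x| ≤ M) (x : EuclideanSpace ℝ (Fin n)) {t : ℝ} (ht : 0 < t) :
    localEntropy β f x t = -β⁻¹ * (-(n : ℝ) / 2 * Real.log (2 * Real.pi * (β⁻¹ * t))
      - β / t / 2 * ‖x‖ ^ 2
      + Real.log (lapT (fun y => Real.exp (-β * f y)) ((β / t) • x, β / t / 2))) := by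
  unfold localEntropy
  have hG := expGrowth_exp hβ hf hfb
  have hH := lapT_pos hG (fun y => Real.exp_pos _) (w := ((β / t) • x, β / t / 2))
    (by simp only; positivity)
  have h1 : ∫ y, heatKernel (β⁻¹ * t) (x - y) * Real.exp (-β * f y) =
      (2 * Real.pi * (β⁻¹ * t)) ^ (-(n : ℝ) / 2) * Real.exp (-(β / t / 2 * ‖x‖ ^ 2)) *
      lapT (fun y => Real.exp (-β * f y)) ((β / t) • x, β / t / 2) := by
    unfold lapT
    rw [← integral_const_mul]
    congr 1
    funext y
    unfold heatKernel
    have : -‖x - y‖ ^ 2 / (2 * (β⁻¹ * t)) =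
        -(β / t / 2 * ‖x‖ ^ 2) + ellForm y ((β / t) • x, β / t / 2) := by
      rw [ellForm_apply, norm_sub_sq_real, real_inner_smul_right, real_inner_comm]
      field_simp
      ring
    rw [this, Real.exp_add, smul_eq_mul]
    ring
  rw [h1, Real.log_mul (by positivity) hH.ne', Real.log_mul (by positivity) (by positivity),
    Real.log_rpow (by positivity), Real.log_exp]
  ring

lemma localEntropy_smooth {β : ℝ} (hβ : 0 < β) {f : EuclideanSpace ℝ (Fin n) → ℝ}
    (hf : Continuous f) (hfb : ∃ M, ∀ x, |f x| ≤ M) :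
    ContDiffOn ℝ (⊤ : ℕ∞)
      (fun p : EuclideanSpace ℝ (Fin n) × ℝ => localEntropy β f p.1 p.2)
      (Set.univ ×ˢ Set.Ioi 0) := by
  have hG := expGrowth_exp hβ hf hfb
  have hpos : ∀ p ∈ (Set.univ ×ˢ Set.Ioi 0 : Set (EuclideanSpace ℝ (Fin n) × ℝ)), 0 < p.2 :=
    fun p hp => hp.2
  have hq : ContDiffOn ℝ (⊤ : ℕ∞) (fun p : EuclideanSpace ℝ (Fin n) × ℝ => β / p.2)
      (Set.univ ×ˢ Set.Ioi 0) :=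
    contDiffOn_const.div contDiffOn_snd fun p hp => (hpos p hp).ne'
  have hcurve : ContDiffOn ℝ (⊤ : ℕ∞) (fun p : EuclideanSpace ℝ (Fin n) × ℝ =>
      ((β / p.2) • p.1, β / p.2 / 2)) (Set.univ ×ˢ Set.Ioi 0) :=
    (hq.smul contDiffOn_fst).prodMk (hq.div_const 2)
  have hmaps : Set.MapsTo (fun p : EuclideanSpace ℝ (Fin n) × ℝ =>
      ((β / p.2) • p.1, β / p.2 / 2)) (Set.univ ×ˢ Set.Ioi 0) {w | 0 < w.2} := by
    intro p hp
    have := hpos p hp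
    simp only [Set.mem_ofPred_eq]
    positivity
  have hL := (contDiffOn_lapT hG).comp hcurve hmaps
  have hlog := hL.log fun p hp => (lapT_pos hG (fun y => Real.exp_pos _) (hmaps hp)).ne'
  have hlog2 : ContDiffOn ℝ (⊤ : ℕ∞) (fun p : EuclideanSpace ℝ (Fin n) × ℝ =>
      Real.log (2 * Real.pi * (β⁻¹ * p.2))) (Set.univ ×ˢ Set.Ioi 0) := by
    refine ContDiffOn.log (contDiffOn_const.mul (contDiffOn_const.mul contDiffOn_snd))
      fun p hp => ?_
    have := hpos p hp
    positivity
  have hn : ContDiffOn ℝ (⊤ : ℕ∞) (fun p : EuclideanSpace ℝ (Fin n) × ℝ => ‖p.1‖ ^ 2)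
      (Set.univ ×ˢ Set.Ioi 0) := contDiffOn_fst.norm_sq ℝ
  refine ContDiffOn.congr ((contDiffOn_const (c := -β⁻¹)).mul
    ((((contDiffOn_const (c := -(n : ℝ) / 2)).mul hlog2).sub
    ((hq.div_const 2).mul hn)).add hlog)) fun p hp => ?_
  exact localEntropy_eq hβ hf hfb p.1 (hpos p hp)

lemma localEntropy_fderiv {β : ℝ} (hβ : 0 < β) {f : EuclideanSpace ℝ (Fin n) → ℝ}
    (hf : Continuous f) (hfb : ∃ M, ∀ x, |f x| ≤ M) {t : ℝ} (ht : 0 < t)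
    (x : EuclideanSpace ℝ (Fin n)) (i : Fin n) :
    fderiv ℝ (fun y => localEntropy β f y t) x (EuclideanSpace.single i 1) =
      -β⁻¹ * (-(β / t * x i) + β / t *
        (lapT (fun y => y i * Real.exp (-β * f y)) ((β / t) • x, β / t / 2) /
          lapT (fun y => Real.exp (-β * f y)) ((β / t) • x, β / t / 2))) := by
  have hG := expGrowth_exp hβ hf hfb
  have ha : 0 < β / t / 2 := by positivity
  have hH := lapT_pos hG (fun y => Real.exp_pos _) (w := ((β / t) • x, β / t / 2)) ha
  obtain ⟨L, hL, hLi⟩ := hasFDerivAt_lapT_space hG (β / t) ha x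
  have h1 : (fun y => localEntropy β f y t) = fun x =>
      -β⁻¹ * (-(n : ℝ) / 2 * Real.log (2 * Real.pi * (β⁻¹ * t))
      - β / t / 2 * ‖x‖ ^ 2
      + Real.log (lapT (fun y => Real.exp (-β * f y)) ((β / t) • x, β / t / 2))) :=
    funext fun x => localEntropy_eq hβ hf hfb x ht
  have h2 := ((((hasStrictFDerivAt_norm_sq x).hasFDerivAt.const_mul (β / t / 2)).const_sub
    (-(n : ℝ) / 2 * Real.log (2 * Real.pi * (β⁻¹ * t)))).add (hL.log hH.ne')).const_mul (-β⁻¹)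
  rw [h1]
  refine (congrArg (fun T => T (EuclideanSpace.single i 1)) (HasFDerivAt.fderiv h2)).trans ?_
  simp [hLi, EuclideanSpace.inner_single_right]
  generalize lapT (n := n) (F := ℝ) _ _ = A
  generalize lapT (n := n) (F := ℝ) _ _ = B
  ring

lemma localEntropy_fderiv2 {β : ℝ} (hβ : 0 < β) {f : EuclideanSpace ℝ (Fin n) → ℝ}
    (hf : Continuous f) (hfb : ∃ M, ∀ x, |f x| ≤ M) {t : ℝ} (ht : 0 < t)
    (x : EuclideanSpace ℝ (Fin n)) (i : Fin n) :
    fderiv ℝ (fun z => fderiv ℝ (fun y => localEntropy β f y t) z (EuclideanSpace.single i 1)) x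
      (EuclideanSpace.single i 1) =
      -β⁻¹ * (-(β / t) + (β / t) ^ 2 *
        (lapT (fun y => y i * (y i * Real.exp (-β * f y))) ((β / t) • x, β / t / 2) /
          lapT (fun y => Real.exp (-β * f y)) ((β / t) • x, β / t / 2)
        - (lapT (fun y => y i * Real.exp (-β * f y)) ((β / t) • x, β / t / 2) /
          lapT (fun y => Real.exp (-β * f y)) ((β / t) • x, β / t / 2)) ^ 2)) := by
  have hG := expGrowth_exp hβ hf hfb
  have ha : 0 < β / t / 2 := by positivity
  have hH := lapT_pos hG (fun y => Real.exp_pos _) (w := ((β / t) • x, β / t / 2)) ha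
  obtain ⟨L, hL, hLi⟩ := hasFDerivAt_lapT_space hG (β / t) ha x
  obtain ⟨K, hK, hKi⟩ := hasFDerivAt_lapT_space (hG.coord i) (β / t) ha x
  have h1 := funext fun z => localEntropy_fderiv hβ hf hfb ht z i
  have hp : HasFDerivAt (fun z : EuclideanSpace ℝ (Fin n) => z i)
      (EuclideanSpace.proj i : EuclideanSpace ℝ (Fin n) →L[ℝ] ℝ) x :=
    (EuclideanSpace.proj i : EuclideanSpace ℝ (Fin n) →L[ℝ] ℝ).hasFDerivAt
  have h2 := ((hp.const_mul (β / t)).neg.add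
    ((hK.mul ((hasDerivAt_inv hH.ne').comp_hasFDerivAt x hL)).const_mul (β / t))).const_mul (-β⁻¹)
  rw [h1]
  refine (congrArg (fun T => T (EuclideanSpace.single i 1)) (HasFDerivAt.fderiv h2)).trans ?_
  simp [hLi, hKi]
  generalize lapT (n := n) (F := ℝ) _ _ = A
  generalize lapT (n := n) (F := ℝ) _ _ = B
  generalize lapT (n := n) (F := ℝ) _ _ = D
  ring

lemma localEntropy_deriv {β : ℝ} (hβ : 0 < β) {f : EuclideanSpace ℝ (Fin n) → ℝ}
    (hf : Continuous f) (hfb : ∃ M, ∀ x, |f x| ≤ M) {t : ℝ} (ht : 0 < t)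
    (x : EuclideanSpace ℝ (Fin n)) :
    deriv (localEntropy β f x) t =
      -β⁻¹ * (-(n : ℝ) / 2 / t + β / t ^ 2 / 2 * ‖x‖ ^ 2 +
        lapT (derP fun y => Real.exp (-β * f y)) ((β / t) • x, β / t / 2)
          ((-(β / t ^ 2)) • x, (-(β / t ^ 2)) / 2) /
        lapT (fun y => Real.exp (-β * f y)) ((β / t) • x, β / t / 2)) := by
  have hG := expGrowth_exp hβ hf hfb
  have ha : 0 < β / t / 2 := by positivity
  have hH := lapT_pos hG (fun y => Real.exp_pos _) (w := ((β / t) • x, β / t / 2)) ha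
  have h1 : localEntropy β f x =ᶠ[nhds t] fun t =>
      -β⁻¹ * (-(n : ℝ) / 2 * Real.log (2 * Real.pi * (β⁻¹ * t))
      - β / t / 2 * ‖x‖ ^ 2
      + Real.log (lapT (fun y => Real.exp (-β * f y)) ((β / t) • x, β / t / 2))) := by
    filter_upwards [lt_mem_nhds ht] with s hs using localEntropy_eq hβ hf hfb x hs
  rw [h1.deriv_eq]
  have hq : HasDerivAt (fun t : ℝ => β / t) (-(β / t ^ 2)) t := by
    have := (hasDerivAt_inv ht.ne').const_mul β
    simpa [div_eq_mul_inv] using this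
  have hcurve : HasDerivAt (fun t : ℝ => ((β / t) • x, β / t / 2))
      ((-(β / t ^ 2)) • x, (-(β / t ^ 2)) / 2) t :=
    (hq.smul_const x).prodMk (hq.div_const 2)
  have hc0 := (hG.hasFDerivAt (w := ((β / t) • x, β / t / 2)) ha).comp_hasDerivAt t hcurve
  have hc := hc0.log hH.ne'
  have hl : HasDerivAt (fun t : ℝ => Real.log (2 * Real.pi * (β⁻¹ * t))) (1 / t) t := by
    have := (((hasDerivAt_id t).const_mul β⁻¹).const_mul (2 * Real.pi)).log
      (by simp only [id]; positivity)
    have e : 1 / t = 2 * Real.pi * (β⁻¹ * 1) / (2 * Real.pi * (β⁻¹ * t)) := by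
      field_simp
    rw [e]
    exact this
  have h2 := (((hl.const_mul (-(n : ℝ) / 2)).sub ((hq.div_const 2).mul_const (‖x‖ ^ 2))).add
    hc).const_mul (-β⁻¹)
  refine (HasDerivAt.deriv h2).trans ?_
  simp only [Function.comp]
  ring

lemma norm_gradient_sq (g : EuclideanSpace ℝ (Fin n) → ℝ) (x : EuclideanSpace ℝ (Fin n)) :
    ‖gradient g x‖ ^ 2 = ∑ i, (fderiv ℝ g x (EuclideanSpace.single i 1)) ^ 2 := by
  rw [EuclideanSpace.norm_sq_eq]
  refine Finset.sum_congr rfl fun i _ => ?_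
  have : fderiv ℝ g x (EuclideanSpace.single i 1)
      = inner ℝ (gradient g x) (EuclideanSpace.single i 1) := by
    unfold gradient
    rw [InnerProductSpace.toDual_symm_apply]
  rw [this, EuclideanSpace.inner_single_right]
  simp

lemma localEntropy_pde {β : ℝ} (hβ : 0 < β) {f : EuclideanSpace ℝ (Fin n) → ℝ}
    (hf : Continuous f) (hfb : ∃ M, ∀ x, |f x| ≤ M) {t : ℝ} (ht : 0 < t)
    (x : EuclideanSpace ℝ (Fin n)) :
    deriv (localEntropy β f x) t
        = -(1/2) * ‖gradient (fun y => localEntropy β f y t) x‖ ^ 2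
          + (β⁻¹ / 2) * laplacian (fun y => localEntropy β f y t) x := by
  have hG := expGrowth_exp hβ hf hfb
  have ha : 0 < β / t / 2 := by positivity
  have hH := lapT_pos hG (fun y => Real.exp_pos _) (w := ((β / t) • x, β / t / 2)) ha
  rw [norm_gradient_sq, localEntropy_deriv hβ hf hfb ht, lapT_curve hG ha]
  unfold laplacian
  simp only [localEntropy_fderiv2 hβ hf hfb ht]
  simp only [localEntropy_fderiv hβ hf hfb ht]
  have hn : (n : ℝ) = ∑ i : Fin n, (1 : ℝ) := by simp
  have hx : ‖x‖ ^ 2 = ∑ i, x i ^ 2 := by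
    rw [EuclideanSpace.norm_sq_eq]; simp
  rw [hx, hn]
  rw [show (-∑ i : Fin n, (1 : ℝ)) / 2 / t = (-1 / 2 / t) * ∑ i : Fin n, (1 : ℝ) by ring]
  simp only [Finset.mul_sum, Finset.sum_div, ← Finset.sum_add_distrib]
  refine Finset.sum_congr rfl fun i _ => ?_
  generalize lapT (fun y => y i * (y i * Real.exp (-β * f y))) _ = D
  generalize lapT (fun y => y i * Real.exp (-β * f y)) _ = B
  generalize lapT (n := n) (F := ℝ) _ _ = A at hH ⊢
  field_simp
  ring

lemma heat_rescale (s : ℝ) (hs : 0 < s) (g : EuclideanSpace ℝ (Fin n) → ℝ)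
    (x : EuclideanSpace ℝ (Fin n)) :
    ∫ y, heatKernel s (x - y) * g y =
      ∫ z, heatKernel 1 z * g (x - Real.sqrt s • z) := by
  have hr : 0 < Real.sqrt s := Real.sqrt_pos.2 hs
  rw [← integral_sub_left_eq_self (fun y => heatKernel s (x - y) * g y) volume x]
  simp only [sub_sub_cancel]
  have h := Measure.integral_comp_smul_of_nonneg (volume : Measure (EuclideanSpace ℝ (Fin n)))
    (fun y => heatKernel s y * g (x - y)) (Real.sqrt s) (hR := hr.le)
  have h' : ∫ y, heatKernel s y * g (x - y) = (Real.sqrt s) ^ n *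
      ∫ z, heatKernel s (Real.sqrt s • z) * g (x - Real.sqrt s • z) := by
    rw [h, finrank_euclideanSpace_fin, smul_eq_mul]
    field_simp
  rw [h', ← integral_const_mul]
  congr 1
  funext z
  unfold heatKernel
  rw [norm_smul, mul_pow, Real.norm_eq_abs, sq_abs, Real.sq_sqrt hs.le,
    Real.mul_rpow (by positivity) hs.le]
  have h1 : Real.sqrt s ^ n * s ^ (-(n : ℝ) / 2) = 1 := by
    rw [Real.sqrt_eq_rpow, ← Real.rpow_natCast, ← Real.rpow_mul hs.le, ← Real.rpow_add hs]
    rw [show 1 / 2 * (n : ℝ) + -(n : ℝ) / 2 = 0 by ring, Real.rpow_zero]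
  have h2 : -(s * ‖z‖ ^ 2) / (2 * s) = -‖z‖ ^ 2 / (2 * 1) := by field_simp
  rw [h2, mul_one (2 * Real.pi)]
  linear_combination ((2 * Real.pi) ^ (-(n : ℝ) / 2) * Real.exp (-‖z‖ ^ 2 / (2 * 1)) *
    g (x - Real.sqrt s • z)) * h1

lemma heatKernel_one (z : EuclideanSpace ℝ (Fin n)) :
    heatKernel 1 z = (2 * Real.pi) ^ (-(n : ℝ) / 2) * Real.exp (-(1 / 2) * ‖z‖ ^ 2) := by
  unfold heatKernel
  rw [mul_one, mul_one]
  congr 2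
  ring

lemma integral_heatKernel_one :
    ∫ z : EuclideanSpace ℝ (Fin n), heatKernel 1 z = 1 := by
  simp_rw [heatKernel_one]
  rw [integral_const_mul, GaussianFourier.integral_rexp_neg_mul_sq_norm (by norm_num),
    finrank_euclideanSpace_fin, show Real.pi / (1 / 2) = 2 * Real.pi by ring,
    ← Real.rpow_add (by positivity), show -(n : ℝ) / 2 + (n : ℝ) / 2 = 0 by ring, Real.rpow_zero]

lemma integrable_heatKernel_one :
    Integrable (fun z : EuclideanSpace ℝ (Fin n) => heatKernel 1 z) := by
  simp_rw [heatKernel_one]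
  exact (integrable_gauss (by norm_num)).const_mul _

lemma localEntropy_tendsto {β : ℝ} (hβ : 0 < β) {f : EuclideanSpace ℝ (Fin n) → ℝ}
    (hf : Continuous f) (hfb : ∃ M, ∀ x, |f x| ≤ M) (x : EuclideanSpace ℝ (Fin n)) :
    Filter.Tendsto (fun t => localEntropy β f x t)
      (nhdsWithin 0 (Set.Ioi 0)) (nhds (f x)) := by
  have hk : Continuous (fun z : EuclideanSpace ℝ (Fin n) => heatKernel 1 z) := by
    simp_rw [heatKernel_one]; fun_prop
  have hlim : Filter.Tendsto (fun t => ∫ z, heatKernel 1 z *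
      Real.exp (-β * f (x - Real.sqrt (β⁻¹ * t) • z))) (nhdsWithin 0 (Set.Ioi 0))
      (nhds (∫ z : EuclideanSpace ℝ (Fin n), heatKernel 1 z * Real.exp (-β * f x))) := by
    obtain ⟨M, hM⟩ := hfb
    refine tendsto_integral_filter_of_dominated_convergence
      (fun z => heatKernel 1 z * Real.exp (β * M)) ?_ ?_
      (integrable_heatKernel_one.mul_const _) ?_
    · exact Filter.Eventually.of_forall fun t => Continuous.aestronglyMeasurable (by fun_prop)
    · refine Filter.Eventually.of_forall fun t => Filter.Eventually.of_forall fun z => ?_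
      have h0 : 0 ≤ heatKernel 1 z := by rw [heatKernel_one]; positivity
      rw [norm_mul, Real.norm_of_nonneg h0, Real.norm_of_nonneg (Real.exp_pos _).le]
      refine mul_le_mul_of_nonneg_left (Real.exp_le_exp.2 ?_) h0
      have := neg_le_of_abs_le (hM (x - Real.sqrt (β⁻¹ * t) • z))
      nlinarith
    · refine Filter.Eventually.of_forall fun z => ?_
      have hc : Continuous (fun t : ℝ => heatKernel 1 z *
          Real.exp (-β * f (x - Real.sqrt (β⁻¹ * t) • z))) := by fun_prop
      have := (hc.tendsto 0).mono_left (nhdsWithin_le_nhds (s := Set.Ioi 0))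
      simpa using this
  rw [integral_mul_const, integral_heatKernel_one, one_mul] at hlim
  have h2 := ((hlim.log (Real.exp_pos _).ne').const_mul (-β⁻¹))
  rw [Real.log_exp, show -β⁻¹ * (-β * f x) = f x by field_simp] at h2
  refine h2.congr' ?_
  filter_upwards [self_mem_nhdsWithin] with t ht
  have ht' : 0 < β⁻¹ * t := mul_pos (inv_pos.2 hβ) ht
  unfold localEntropy
  rw [heat_rescale _ ht']

end Entropy

/-- The local entropy is smooth on `ℝⁿ × (0,∞)`, solves the viscous Hamilton–Jacobi
equation there, and converges to `f(x)` as `t → 0⁺`. -/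
theorem stmt_1 (n : ℕ) (hn : 1 ≤ n) (β : ℝ) (hβ : 0 < β)
    (f : EuclideanSpace ℝ (Fin n) → ℝ) (hf : Continuous f)
    (hfb : ∃ M, ∀ x, |f x| ≤ M) :
    ContDiffOn ℝ (⊤ : ℕ∞)
      (fun p : EuclideanSpace ℝ (Fin n) × ℝ => localEntropy β f p.1 p.2)
      (Set.univ ×ˢ Set.Ioi 0) ∧
    (∀ x t, 0 < t →
      deriv (localEntropy β f x) t
        = -(1/2) * ‖gradient (fun y => localEntropy β f y t) x‖ ^ 2
          + (β⁻¹ / 2) * laplacian (fun y => localEntropy β f y t) x) ∧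
    (∀ x, Filter.Tendsto (fun t => localEntropy β f x t)
      (nhdsWithin 0 (Set.Ioi 0)) (nhds (f x))) := by
  exact ⟨localEntropy_smooth hβ hf hfb, fun x t ht => localEntropy_pde hβ hf hfb ht x,
    fun x => localEntropy_tendsto hβ hf hfb x⟩
end

section
/- Let n ≥ 1, β > 0, t > 0, and let f : ℝⁿ → ℝ be continuously differentiable, bounded, with bounded gradient. Define u(x,t) = −β⁻¹ log( ∫_{ℝⁿ} G_{β⁻¹ t}(x−y) exp(−β f(y)) dy ) where G_s(x) = (2πs)^{−n/2} exp(−‖x‖²/(2s)). For each x let ρ₂(y; x) = Z₂(x)⁻¹ exp(−β f(x−y) − (β/(2t))‖y‖²), where Z₂(x) = ∫_{ℝⁿ} exp(−β f(x−y) − (β/(2t))‖y‖²) dy. Then the spatial gradient of u satisfies ∇u(x,t) = ∫_{ℝⁿ} ∇f(x−y) ρ₂(y; x) dy for every x ∈ ℝⁿ. -/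
open Real MeasureTheory

/-- The normalizing constant `Z₂(x) = ∫ exp(-β f(x-y) - (β/(2t))‖y‖²) dy`. -/
noncomputable def Z2 {n : ℕ} (β t : ℝ) (f : EuclideanSpace ℝ (Fin n) → ℝ)
    (x : EuclideanSpace ℝ (Fin n)) : ℝ :=
  ∫ y, Real.exp (-β * f (x - y) - (β / (2 * t)) * ‖y‖ ^ 2)

/-- The Gibbs density `ρ₂(y; x) = Z₂(x)⁻¹ exp(-β f(x-y) - (β/(2t))‖y‖²)`. -/
noncomputable def rho2 {n : ℕ} (β t : ℝ) (f : EuclideanSpace ℝ (Fin n) → ℝ)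
    (x y : EuclideanSpace ℝ (Fin n)) : ℝ :=
  (Z2 β t f x)⁻¹ * Real.exp (-β * f (x - y) - (β / (2 * t)) * ‖y‖ ^ 2)

lemma gauss_integrable {n : ℕ} {b : ℝ} (hb : 0 < b) :
    Integrable (fun y : EuclideanSpace ℝ (Fin n) => Real.exp (-b * ‖y‖ ^ 2)) := by
  by_contra h
  have h1 := integral_undef h
  rw [GaussianFourier.integral_rexp_neg_mul_sq_norm hb] at h1
  have : (0 : ℝ) < (π / b) ^ ((Module.finrank ℝ (EuclideanSpace ℝ (Fin n)) : ℝ) / 2) := by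
    positivity
  exact this.ne' h1

/-- The spatial gradient of the local entropy is the average of `∇f(x-y)` against
the Gibbs density `ρ₂(y; x)`. -/
theorem stmt_3 (n : ℕ) (hn : 1 ≤ n) (β t : ℝ) (hβ : 0 < β) (ht : 0 < t)
    (f : EuclideanSpace ℝ (Fin n) → ℝ) (hf : ContDiff ℝ 1 f)
    (hfb : ∃ M, ∀ x, |f x| ≤ M) (hfg : ∃ M, ∀ x, ‖gradient f x‖ ≤ M) :
    ∀ x, gradient (fun x' => localEntropy β f x' t) x
      = ∫ y, rho2 β t f x y • gradient f (x - y) := by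
  obtain ⟨M, hM⟩ := hfb
  obtain ⟨L, hL⟩ := hfg
  intro x
  have hb : 0 < β / (2 * t) := by positivity
  have hcf : Continuous f := hf.continuous
  have hcf' : Continuous (fderiv ℝ f) := hf.continuous_fderiv one_ne_zero
  have hcg : Continuous (gradient f) :=
    (InnerProductSpace.toDual ℝ (EuclideanSpace ℝ (Fin n))).symm.continuous.comp hcf'
  have hnorm : ∀ z, ‖fderiv ℝ f z‖ ≤ L := by
    intro z
    have := hL z
    rwa [gradient, LinearIsometryEquiv.norm_map] at this
  have hL0 : 0 ≤ L := (norm_nonneg _).trans (hL x)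
  set E : EuclideanSpace ℝ (Fin n) → EuclideanSpace ℝ (Fin n) → ℝ := fun x y =>
    Real.exp (-β * f (x - y) - (β / (2 * t)) * ‖y‖ ^ 2) with hE
  have hEc : ∀ x, Continuous (E x) := by
    intro x
    simp only [hE]
    fun_prop
  have hEle : ∀ x y, E x y ≤ Real.exp (β * M) * Real.exp (-(β / (2 * t)) * ‖y‖ ^ 2) := by
    intro x y
    simp only [hE]
    rw [← Real.exp_add]
    apply Real.exp_le_exp.2
    have h1 := (abs_le.1 (hM (x - y))).1
    nlinarith
  have hgi : Integrable (fun y : EuclideanSpace ℝ (Fin n) =>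
      Real.exp (β * M) * Real.exp (-(β / (2 * t)) * ‖y‖ ^ 2)) :=
    (gauss_integrable hb).const_mul _
  have hEpos : ∀ x y, 0 < E x y := fun x y => Real.exp_pos _
  have hEi : ∀ x, Integrable (E x) := by
    intro x
    refine hgi.mono' (hEc x).aestronglyMeasurable (Filter.Eventually.of_forall fun y => ?_)
    rw [Real.norm_of_nonneg (hEpos x y).le]
    exact hEle x y
  have hZpos : ∀ x, 0 < Z2 β t f x := by
    intro x
    exact integral_exp_pos (hEi x)
  have hgrad : ∀ z w, inner ℝ (gradient f z) w = fderiv ℝ f z w := by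
    intro z w
    rw [gradient, InnerProductSpace.toDual_symm_apply]
  have hbd : ∀ x y, ‖(-β * E x y) • fderiv ℝ f (x - y)‖ ≤
      β * L * (Real.exp (β * M) * Real.exp (-(β / (2 * t)) * ‖y‖ ^ 2)) := by
    intro x y
    rw [norm_smul, norm_mul, norm_neg, Real.norm_of_nonneg hβ.le,
      Real.norm_of_nonneg (hEpos x y).le]
    calc β * E x y * ‖fderiv ℝ f (x - y)‖
        ≤ β * (Real.exp (β * M) * Real.exp (-(β / (2 * t)) * ‖y‖ ^ 2)) * L := by
          gcongr
          · exact hEle x y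
          · exact hnorm _
      _ = _ := by ring
  have hF'c : Continuous (fun y => (-β * E x y) • fderiv ℝ f (x - y)) :=
    (continuous_const.mul (hEc x)).smul (hcf'.comp (continuous_const.sub continuous_id))
  have hF'i : Integrable (fun y => (-β * E x y) • fderiv ℝ f (x - y)) :=
    (hgi.const_mul (β * L)).mono' hF'c.aestronglyMeasurable
      (Filter.Eventually.of_forall fun y => hbd x y)
  have hD : HasFDerivAt (Z2 β t f) (∫ y, (-β * E x y) • fderiv ℝ f (x - y)) x := by
    refine hasFDerivAt_integral_of_dominated_of_fderiv_le (F := E)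
      (F' := fun x y => (-β * E x y) • fderiv ℝ f (x - y)) (s := Set.univ) Filter.univ_mem
      (Filter.Eventually.of_forall fun z => (hEc z).aestronglyMeasurable) (hEi x)
      hF'c.aestronglyMeasurable
      (Filter.Eventually.of_forall fun y z _ => hbd z y) (hgi.const_mul (β * L))
      (Filter.Eventually.of_forall fun y z _ => ?_)
    have h1 : HasFDerivAt (fun z => f (z - y)) (fderiv ℝ f (z - y)) z :=
      (hasFDerivAt_comp_sub y).2 ((hf.differentiable one_ne_zero) (z - y)).hasFDerivAt
    have h2 := ((h1.const_mul (-β)).sub_const ((β / (2 * t)) * ‖y‖ ^ 2)).exp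
    rw [smul_smul, mul_comm _ (-β)] at h2
    exact h2
  have hC : (0 : ℝ) < (2 * Real.pi * (β⁻¹ * t)) ^ (-(n : ℝ) / 2) := by positivity
  have hu : (fun x' => localEntropy β f x' t) = fun x' =>
      -β⁻¹ * Real.log ((2 * Real.pi * (β⁻¹ * t)) ^ (-(n : ℝ) / 2) * Z2 β t f x') := by
    funext z
    rw [localEntropy, Z2, ← integral_const_mul, ← integral_sub_left_eq_self _ volume z]
    congr 3
    funext y
    rw [heatKernel, sub_sub_cancel, mul_assoc, ← Real.exp_add]
    congr 2
    field_simp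
    ring
  have hu' := ((hD.const_mul ((2 * Real.pi * (β⁻¹ * t)) ^ (-(n : ℝ) / 2))).log
    (mul_pos hC (hZpos x)).ne').const_mul (-β⁻¹)
  rw [← hu] at hu'
  have hri : Integrable (fun y => rho2 β t f x y • gradient f (x - y)) := by
    have hc : Continuous (fun y => rho2 β t f x y • gradient f (x - y)) :=
      (continuous_const.mul (hEc x)).smul (hcg.comp (continuous_const.sub continuous_id))
    refine (((hEi x).const_mul (Z2 β t f x)⁻¹).mul_const L).mono' hc.aestronglyMeasurable
      (Filter.Eventually.of_forall fun y => ?_)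
    have h0 : 0 ≤ (Z2 β t f x)⁻¹ * E x y :=
      mul_nonneg (inv_nonneg.2 (hZpos x).le) (hEpos x y).le
    rw [norm_smul]
    change ‖(Z2 β t f x)⁻¹ * E x y‖ * _ ≤ _
    rw [Real.norm_of_nonneg h0]
    exact mul_le_mul_of_nonneg_left (hL _) h0
  refine ext_inner_right ℝ fun w => ?_
  rw [gradient, InnerProductSpace.toDual_symm_apply, hu'.fderiv, real_inner_comm,
    ← integral_inner hri]
  simp only [ContinuousLinearMap.smul_apply, ContinuousLinearMap.integral_apply hF'i,
    smul_eq_mul]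
  rw [← integral_const_mul, ← integral_const_mul, ← integral_const_mul]
  congr 1
  funext y
  rw [real_inner_comm, real_inner_smul_left, hgrad]
  change _ = (Z2 β t f x)⁻¹ * E x y * _
  have := (hZpos x).ne'
  have := hC.ne'
  field_simp
end

section
/- Let n ≥ 1, β > 0, T > 0, and let u : ℝⁿ × [0,T] → ℝ be a smooth solution of the viscous Hamilton–Jacobi equation ∂u/∂t = −(1/2)‖∇u‖² + (β⁻¹/2)Δu, such that ∇u and all spatial derivatives of u up to fourth order are bounded on ℝⁿ × [0,T]. Suppose C_Lap > 0 satisfies Δu(x,0) ≤ C_Lap for all x ∈ ℝⁿ. Then Δu(x,t) ≤ 1/(C_Lap⁻¹ + t/n) for all x ∈ ℝⁿ and all t ∈ [0,T]. -/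
open Real

section HJ
variable {F : Type*} [NormedAddCommGroup F] [NormedSpace ℝ F]

/-- Directional derivative within a set. -/
noncomputable def DD (S : Set F) (w : F) (G : F → ℝ) : F → ℝ := fun p => fderivWithin ℝ G S p w

/-- Smooth on a set. -/
def Sm (S : Set F) (G : F → ℝ) : Prop := ContDiffOn ℝ (⊤ : ℕ∞) G S

lemma Sm.diffAt {S : Set F} {G : F → ℝ} (h : Sm S G) {p : F} (hp : p ∈ S) :
    DifferentiableWithinAt ℝ G S p :=
  (ContDiffOn.differentiableOn h (by simp)) p hp

lemma Sm.fd {S : Set F} {G : F → ℝ} (hS : UniqueDiffOn ℝ S) (h : Sm S G) :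
    ContDiffOn ℝ (⊤ : ℕ∞) (fderivWithin ℝ G S) S :=
  ContDiffOn.fderivWithin h hS (by simp)

lemma Sm.DD {S : Set F} {G : F → ℝ} (hS : UniqueDiffOn ℝ S) (h : Sm S G) (w : F) :
    Sm S (DD S w G) :=
  (h.fd hS).clm_apply contDiffOn_const

lemma DD_DD {S : Set F} {G : F → ℝ} (hS : UniqueDiffOn ℝ S) (h : Sm S G) (w w' : F)
    {p : F} (hp : p ∈ S) :
    DD S w (DD S w' G) p = fderivWithin ℝ (fderivWithin ℝ G S) S p w w' := by
  have h1 : DifferentiableWithinAt ℝ (fderivWithin ℝ G S) S p :=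
    ((h.fd hS).differentiableOn (by simp)) p hp
  have := (h1.hasFDerivWithinAt.clm_apply
    (hasFDerivWithinAt_const w' p S)).fderivWithin (hS p hp)
  show fderivWithin ℝ (fun q => fderivWithin ℝ G S q w') S p w = _
  rw [this]
  simp

lemma DD_comm {S : Set F} {G : F → ℝ} (hS : UniqueDiffOn ℝ S) (hc : S ⊆ closure (interior S))
    (h : Sm S G) (w w' : F) {p : F} (hp : p ∈ S) :
    DD S w (DD S w' G) p = DD S w' (DD S w G) p := by
  rw [DD_DD hS h _ _ hp, DD_DD hS h _ _ hp]
  exact (ContDiffWithinAt.isSymmSndFDerivWithinAt (h p hp) (by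
    rw [minSmoothness_of_isRCLikeNormedField]; exact WithTop.coe_le_coe.2 (le_top : (2 : ℕ∞) ≤ ⊤)) hS (hc hp) hp) w w'

lemma DD_congr {S : Set F} {G H : F → ℝ} (h : Set.EqOn G H S) (w : F) :
    Set.EqOn (DD S w G) (DD S w H) S := by
  intro p hp
  simp only [DD]
  rw [fderivWithin_congr h (h hp)]

lemma DD_add {S : Set F} {G H : F → ℝ} (hS : UniqueDiffOn ℝ S) (hG : Sm S G) (hH : Sm S H)
    (w : F) {p : F} (hp : p ∈ S) :
    DD S w (fun q => G q + H q) p = DD S w G p + DD S w H p := by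
  simp only [DD]
  rw [((hG.diffAt hp).hasFDerivWithinAt.fun_add (hH.diffAt hp).hasFDerivWithinAt).fderivWithin
    (hS p hp)]
  simp

lemma DD_mul {S : Set F} {G H : F → ℝ} (hS : UniqueDiffOn ℝ S) (hG : Sm S G) (hH : Sm S H)
    (w : F) {p : F} (hp : p ∈ S) :
    DD S w (fun q => G q * H q) p = G p * DD S w H p + H p * DD S w G p := by
  simp only [DD]
  rw [fderivWithin_fun_mul (hS p hp) (hG.diffAt hp) (hH.diffAt hp)]
  simp

lemma DD_cmul {S : Set F} {G : F → ℝ} (hS : UniqueDiffOn ℝ S) (hG : Sm S G) (c : ℝ)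
    (w : F) {p : F} (hp : p ∈ S) :
    DD S w (fun q => c * G q) p = c * DD S w G p := by
  simp only [DD]
  rw [fderivWithin_const_mul (hS p hp) (hG.diffAt hp)]
  simp

lemma DD_sum {ι : Type*} [Fintype ι] {S : Set F} {G : ι → F → ℝ} (hS : UniqueDiffOn ℝ S)
    (hG : ∀ i, Sm S (G i)) (w : F) {p : F} (hp : p ∈ S) :
    DD S w (fun q => ∑ i, G i q) p = ∑ i, DD S w (G i) p := by
  simp only [DD]
  rw [fderivWithin_fun_sum (hS p hp) (fun i _ => (hG i).diffAt hp)]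
  simp

lemma Sm.sum {ι : Type*} [Fintype ι] {S : Set F} {G : ι → F → ℝ}
    (hG : ∀ i, Sm S (G i)) : Sm S (fun q => ∑ i, G i q) :=
  ContDiffOn.sum (fun i _ => hG i)

lemma Sm.mul {S : Set F} {G H : F → ℝ} (hG : Sm S G) (hH : Sm S H) :
    Sm S (fun q => G q * H q) := ContDiffOn.mul hG hH

lemma Sm.add {S : Set F} {G H : F → ℝ} (hG : Sm S G) (hH : Sm S H) :
    Sm S (fun q => G q + H q) := ContDiffOn.add hG hH

lemma Sm.cmul {S : Set F} {G : F → ℝ} (hG : Sm S G) (c : ℝ) :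
    Sm S (fun q => c * G q) := ContDiffOn.mul contDiffOn_const hG

/-- The evolution equation for the Laplacian. -/
lemma evol {ι : Type*} [Fintype ι] {S : Set F} {U : F → ℝ} (hS : UniqueDiffOn ℝ S)
    (hc : S ⊆ closure (interior S)) (hU : Sm S U) (e : ι → F) (τ : F) (b : ℝ)
    (hpde : ∀ p ∈ S, DD S τ U p = -(1/2) * ∑ j, DD S (e j) U p * DD S (e j) U p
      + b * ∑ j, DD S (e j) (DD S (e j) U) p) {p : F} (hp : p ∈ S) :
    DD S τ (fun q => ∑ i, DD S (e i) (DD S (e i) U) q) p =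
      - ∑ i, ∑ j, (DD S (e i) (DD S (e j) U) p) ^ 2
      - ∑ j, DD S (e j) U p * DD S (e j) (fun q => ∑ i, DD S (e i) (DD S (e i) U) q) p
      + b * ∑ i, DD S (e i) (DD S (e i) (fun q => ∑ i, DD S (e i) (DD S (e i) U) q)) p := by
  have s1 : ∀ i, Sm S (DD S (e i) U) := fun i => hU.DD hS _
  have s2 : ∀ i j, Sm S (DD S (e i) (DD S (e j) U)) := fun i j => (s1 j).DD hS _
  have sv : Sm S (fun q => ∑ i, DD S (e i) (DD S (e i) U) q) := Sm.sum fun i => s2 i i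
  have sq : ∀ j, Sm S (fun q => DD S (e j) U q * DD S (e j) U q) := fun j => (s1 j).mul (s1 j)
  have ssq : Sm S (fun q => ∑ j, DD S (e j) U q * DD S (e j) U q) := Sm.sum sq
  -- first derivative of the equation
  have h1 : ∀ i, Set.EqOn (DD S τ (DD S (e i) U))
      (fun q => (-1) * ∑ j, DD S (e j) U q * DD S (e i) (DD S (e j) U) q
        + b * DD S (e i) (fun q => ∑ i, DD S (e i) (DD S (e i) U) q) q) S := by
    intro i q hq
    rw [DD_comm hS hc hU _ _ hq, DD_congr (H := fun p => -(1/2) * ∑ j, DD S (e j) U p * DD S (e j) U p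
      + b * ∑ j, DD S (e j) (DD S (e j) U) p) hpde _ hq,
      DD_add hS (ssq.cmul _) (sv.cmul _) _ hq, DD_cmul hS ssq _ _ hq, DD_cmul hS sv _ _ hq,
      DD_sum hS sq _ hq]
    congr 1
    simp only [DD_mul hS (s1 _) (s1 _) _ hq, Finset.mul_sum]
    exact Finset.sum_congr rfl fun j _ => by ring
  have h2 : ∀ i, DD S τ (DD S (e i) (DD S (e i) U)) p =
      - ∑ j, ((DD S (e i) (DD S (e j) U) p) ^ 2
        + DD S (e j) U p * DD S (e j) (DD S (e i) (DD S (e i) U)) p)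
        + b * DD S (e i) (DD S (e i) (fun q => ∑ i, DD S (e i) (DD S (e i) U) q)) p := by
    intro i
    have sm : ∀ j, Sm S (fun q => DD S (e j) U q * DD S (e i) (DD S (e j) U) q) :=
      fun j => (s1 j).mul (s2 i j)
    rw [DD_comm hS hc (s1 i) _ _ hp, DD_congr (h1 i) _ hp,
      DD_add hS ((Sm.sum sm).cmul _) ((sv.DD hS _).cmul _) _ hp, DD_cmul hS (Sm.sum sm) _ _ hp,
      DD_cmul hS (sv.DD hS _) _ _ hp, DD_sum hS sm _ hp]
    congr 1
    rw [neg_one_mul]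
    congr 1
    refine Finset.sum_congr rfl fun j _ => ?_
    rw [DD_mul hS (s1 _) (s2 _ _) _ hp]
    have e1 : DD S (e i) (DD S (e i) (DD S (e j) U)) p = DD S (e j) (DD S (e i) (DD S (e i) U)) p := by
      rw [DD_congr (fun q hq => DD_comm hS hc hU (e i) (e j) hq) (e i) hp,
        DD_comm hS hc (s1 i) _ _ hp]
    rw [e1]; ring
  rw [DD_sum hS (fun i => s2 i i) _ hp]
  simp only [h2]
  rw [Finset.sum_add_distrib, ← Finset.mul_sum, Finset.sum_neg_distrib]
  congr 1
  simp only [Finset.sum_add_distrib]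
  rw [neg_add', Finset.sum_comm (f := fun i j => DD S (e j) U p * DD S (e j) (DD S (e i) (DD S (e i) U)) p)]
  congr 1
  refine Finset.sum_congr rfl fun j _ => ?_
  rw [DD_sum hS (fun i => s2 i i) _ hp, Finset.mul_sum]

end HJ

/-- Second derivative test. -/
lemma second_test (h h' : ℝ → ℝ) (a : ℝ) (hd : ∀ s, HasDerivAt h (h' s) s)
    (hd2 : HasDerivAt h' a 0) (hmax : ∀ s, h s ≤ h 0) : h' 0 = 0 ∧ a ≤ 0 := by
  have hm : IsLocalMax h 0 := Filter.Eventually.of_forall hmax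
  have h0 : h' 0 = 0 := hm.hasDerivAt_eq_zero (hd 0)
  refine ⟨h0, ?_⟩
  by_contra hlt
  push Not at hlt
  have hderiv : deriv h = h' := funext fun s => (hd s).deriv
  have hmin : IsLocalMin h 0 := by
    apply isLocalMin_of_deriv_deriv_pos
    · rw [hderiv, hd2.deriv]; exact hlt
    · rw [hderiv, h0]
    · exact (hd 0).continuousAt
  have hcst : h =ᶠ[nhds 0] fun _ => h 0 := by
    filter_upwards [hmin] with s hs
    exact le_antisymm (hmax s) hs
  have h3 : h' =ᶠ[nhds 0] fun _ => 0 := by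
    have := hcst.deriv
    rw [hderiv] at this
    simpa using this
  have : a = 0 := by
    rw [← hd2.deriv, h3.deriv_eq]; simp
  linarith

section Strip
variable {n : ℕ}

/-- The closed space-time strip. -/
abbrev strip (n : ℕ) (T : ℝ) : Set (EuclideanSpace ℝ (Fin n) × ℝ) := Set.univ ×ˢ Set.Icc 0 T

/-- Spatial coordinate directions in space-time. -/
noncomputable abbrev ee (i : Fin n) : EuclideanSpace ℝ (Fin n) × ℝ := (EuclideanSpace.single i 1, 0)

lemma strip_unique {T : ℝ} (hT : 0 < T) : UniqueDiffOn ℝ (strip n T) :=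
  uniqueDiffOn_univ.prod (uniqueDiffOn_Icc hT)

lemma strip_closure {T : ℝ} (hT : 0 < T) : strip n T ⊆ closure (interior (strip n T)) := by
  rw [interior_prod_eq, closure_prod_eq, interior_univ, closure_univ, interior_Icc,
    closure_Ioo hT.ne]

lemma slice {T : ℝ} {G : EuclideanSpace ℝ (Fin n) × ℝ → ℝ} (hG : Sm (strip n T) G)
    (x : EuclideanSpace ℝ (Fin n)) {t : ℝ} (ht : t ∈ Set.Icc 0 T) :
    HasFDerivAt (fun y => G (y, t)) ((fderivWithin ℝ G (strip n T) (x, t)).comp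
      (ContinuousLinearMap.inl ℝ _ ℝ)) x := by
  have h1 := (hG.diffAt (p := (x, t)) ⟨trivial, ht⟩).hasFDerivWithinAt
  have h2 : HasFDerivWithinAt (fun y : EuclideanSpace ℝ (Fin n) => (y, t))
    (ContinuousLinearMap.inl ℝ _ ℝ) Set.univ x := (hasFDerivAt_prodMk_left x t).hasFDerivWithinAt
  have := HasFDerivWithinAt.comp (g := G) (t := strip n T) x h1 h2 (fun y _ => ⟨trivial, ht⟩)
  rwa [hasFDerivWithinAt_univ] at this

lemma slice_apply {T : ℝ} {G : EuclideanSpace ℝ (Fin n) × ℝ → ℝ} (hG : Sm (strip n T) G)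
    (x : EuclideanSpace ℝ (Fin n)) {t : ℝ} (ht : t ∈ Set.Icc 0 T) (w) :
    fderiv ℝ (fun y => G (y, t)) x w = DD (strip n T) (w, 0) G (x, t) := by
  rw [(slice hG x ht).fderiv]; simp [DD]

lemma line {T : ℝ} {G : EuclideanSpace ℝ (Fin n) × ℝ → ℝ} (hG : Sm (strip n T) G)
    (x w : EuclideanSpace ℝ (Fin n)) {t : ℝ} (ht : t ∈ Set.Icc 0 T) (s : ℝ) :
    HasDerivAt (fun s : ℝ => G (x + s • w, t)) (DD (strip n T) (w, 0) G (x + s • w, t)) s := by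
  have h1 := slice hG (x + s • w) ht
  have h2 : HasDerivAt (fun s : ℝ => x + s • w) w s := by
    simpa using ((hasDerivAt_id s).smul_const w).const_add x
  have := h1.comp_hasDerivAt s h2
  simp only [ContinuousLinearMap.comp_apply, ContinuousLinearMap.inl_apply] at this
  exact this

lemma timeline {T : ℝ} {G : EuclideanSpace ℝ (Fin n) × ℝ → ℝ} (hG : Sm (strip n T) G)
    (x : EuclideanSpace ℝ (Fin n)) {t : ℝ} (ht : t ∈ Set.Icc 0 T) :
    HasDerivWithinAt (fun s : ℝ => G (x, s)) (DD (strip n T) (0, 1) G (x, t)) (Set.Icc 0 T) t := by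
  have h1 := (hG.diffAt (p := (x, t)) ⟨trivial, ht⟩).hasFDerivWithinAt
  have h2 : HasDerivWithinAt (fun s : ℝ => (x, s)) ((0 : EuclideanSpace ℝ (Fin n)), (1 : ℝ))
      (Set.Icc 0 T) t :=
    ((hasDerivAt_const t x).prodMk (hasDerivAt_id t)).hasDerivWithinAt
  exact h1.comp_hasDerivWithinAt t h2 (fun s hs => ⟨trivial, hs⟩)

lemma lap_eq {T : ℝ} (hT : 0 < T) {U : EuclideanSpace ℝ (Fin n) × ℝ → ℝ} (hU : Sm (strip n T) U)
    (x : EuclideanSpace ℝ (Fin n)) {t : ℝ} (ht : t ∈ Set.Icc 0 T) :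
    laplacian (fun y => U (y, t)) x =
      ∑ i, DD (strip n T) (ee i) (DD (strip n T) (ee i) U) (x, t) := by
  unfold laplacian
  refine Finset.sum_congr rfl fun i _ => ?_
  rw [← slice_apply (hU.DD (strip_unique hT) _) x ht]
  congr 2
  funext y
  exact slice_apply hU y ht _

lemma grad_eq {T : ℝ} {U : EuclideanSpace ℝ (Fin n) × ℝ → ℝ} (hU : Sm (strip n T) U)
    (x : EuclideanSpace ℝ (Fin n)) {t : ℝ} (ht : t ∈ Set.Icc 0 T) :
    ‖gradient (fun y => U (y, t)) x‖ ^ 2 =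
      ∑ i, DD (strip n T) (ee i) U (x, t) * DD (strip n T) (ee i) U (x, t) := by
  rw [EuclideanSpace.real_norm_sq_eq]
  refine Finset.sum_congr rfl fun i _ => ?_
  rw [← slice_apply hU x ht, ← inner_gradient_left, EuclideanSpace.inner_single_right]
  simp [sq]

lemma bound1 {f : EuclideanSpace ℝ (Fin n) → ℝ} {M : ℝ} {x : EuclideanSpace ℝ (Fin n)}
    (h : ‖iteratedFDeriv ℝ 1 f x‖ ≤ M) (i : Fin n) :
    |fderiv ℝ f x (EuclideanSpace.single i 1)| ≤ M := by
  rw [norm_iteratedFDeriv_one] at h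
  refine le_trans ?_ h
  simpa using (fderiv ℝ f x).le_opNorm (EuclideanSpace.single i (1 : ℝ))

lemma bound2 {f : EuclideanSpace ℝ (Fin n) → ℝ} {M : ℝ} {x : EuclideanSpace ℝ (Fin n)}
    (hf : ContDiff ℝ (⊤ : ℕ∞) f)
    (h : ‖iteratedFDeriv ℝ 2 f x‖ ≤ M) :
    laplacian f x ≤ n * M := by
  unfold laplacian
  have : ∀ i ∈ (Finset.univ : Finset (Fin n)),
      fderiv ℝ (fun y => fderiv ℝ f y (EuclideanSpace.single i 1)) x
      (EuclideanSpace.single i 1) ≤ M := by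
    intro i _
    refine le_trans (le_abs_self _) (le_trans ?_ h)
    have h1 : DifferentiableAt ℝ (fderiv ℝ f) x :=
      (hf.fderiv_right (m := (⊤ : ℕ∞)) (by simp)).differentiable (by simp) x
    have h2 := (h1.hasFDerivAt.clm_apply
      (hasFDerivAt_const (EuclideanSpace.single i (1 : ℝ)) x)).fderiv
    rw [h2]
    have := (iteratedFDeriv ℝ 2 f x).le_opNorm
      (fun _ => (EuclideanSpace.single i (1 : ℝ) : EuclideanSpace ℝ (Fin n)))
    rw [iteratedFDeriv_two_apply] at this
    simpa using this
  simpa using Finset.sum_le_sum this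

lemma cs (A : Fin n → Fin n → ℝ) (hn : 1 ≤ n) :
    (∑ i, A i i) ^ 2 / n ≤ ∑ i, ∑ j, A i j ^ 2 := by
  have h1 : (∑ i, A i i) ^ 2 ≤ n * ∑ i, A i i ^ 2 := by
    simpa using sq_sum_le_card_mul_sum_sq (s := Finset.univ) (f := fun i => A i i)
  have h2 : ∑ i, A i i ^ 2 ≤ ∑ i, ∑ j, A i j ^ 2 :=
    Finset.sum_le_sum fun i _ =>
      Finset.single_le_sum (f := fun j => A i j ^ 2) (fun j _ => sq_nonneg _) (Finset.mem_univ i)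
  have hn' : (0 : ℝ) < n := by exact_mod_cast hn
  rw [div_le_iff₀ hn']
  nlinarith

end Strip

lemma hasDerivAt_val {f : ℝ → ℝ} {a b x : ℝ} (h : HasDerivAt f a x) (e : b = a) :
    HasDerivAt f b x := e ▸ h

/-- The maximum principle argument. -/
lemma maxprin (n : ℕ) (hn : 1 ≤ n) (b T M B C : ℝ) (hb : 0 ≤ b) (hT : 0 < T) (hM : 0 ≤ M)
    (hC : 0 < C)
    (v : EuclideanSpace ℝ (Fin n) × ℝ → ℝ) (hv : Sm (strip n T) v)
    (a : Fin n → EuclideanSpace ℝ (Fin n) × ℝ → ℝ)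
    (ha : ∀ i, ∀ p ∈ strip n T, |a i p| ≤ M)
    (hB : ∀ p ∈ strip n T, v p ≤ B)
    (hev : ∀ p ∈ strip n T, DD (strip n T) (0, 1) v p ≤ - (v p ^ 2 / n)
      - ∑ j, a j p * DD (strip n T) (ee j) v p
      + b * ∑ i, DD (strip n T) (ee i) (DD (strip n T) (ee i) v) p)
    (hinit : ∀ x, v (x, 0) ≤ C) :
    ∀ x, ∀ t ∈ Set.Icc (0 : ℝ) T, v (x, t) ≤ 1 / (C⁻¹ + t / n) := by
  have hn' : (0 : ℝ) < n := by exact_mod_cast hn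
  intro x₀ t₀ ht₀
  by_contra hlt
  push Not at hlt
  set φ : ℝ → ℝ := fun t => 1 / (C⁻¹ + t / n) with hφ
  have hden : ∀ t, 0 ≤ t → 0 < C⁻¹ + t / n := fun t ht => by positivity
  have hφpos : ∀ t, 0 ≤ t → 0 < φ t := fun t ht => one_div_pos.2 (hden t ht)
  have hφd : ∀ t, 0 ≤ t → HasDerivAt φ (-(φ t ^ 2 / n)) t := by
    intro t ht
    have h1 : HasDerivAt (fun t : ℝ => C⁻¹ + t / n) (1 / n) t :=
      ((hasDerivAt_id t).div_const (n : ℝ)).const_add _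
    have h2 := (hasDerivAt_const t (1 : ℝ)).fun_div h1 (hden t ht).ne'
    refine hasDerivAt_val h2 ?_
    simp only [hφ]
    have := (hden t ht).ne'
    field_simp
    ring
  set K : ℝ := n * M + 2 * b * n + 1 with hK
  have hKpos : 0 < K := by positivity
  set Ψ : EuclideanSpace ℝ (Fin n) → ℝ → ℝ := fun x t => Real.exp (K * t) * (1 + ‖x‖ ^ 2) with hΨ
  have hΨpos : ∀ x t, 0 < Ψ x t := fun x t => by positivity
  obtain ⟨ε, hε, hεlt⟩ : ∃ ε : ℝ, 0 < ε ∧ 0 < v (x₀, t₀) - φ t₀ - ε * Ψ x₀ t₀ := by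
    refine ⟨(v (x₀, t₀) - φ t₀) / (2 * Ψ x₀ t₀), div_pos (sub_pos.2 hlt) (by have := hΨpos x₀ t₀; positivity), ?_⟩
    have := (hΨpos x₀ t₀).ne'
    have h3 : (v (x₀, t₀) - φ t₀) / (2 * Ψ x₀ t₀) * Ψ x₀ t₀ = (v (x₀, t₀) - φ t₀) / 2 := by
      field_simp
    rw [h3]; linarith
  set W : EuclideanSpace ℝ (Fin n) × ℝ → ℝ := fun p => v p - φ p.2 - ε * Ψ p.1 p.2 with hW
  have hWc : ContinuousOn W (strip n T) := by
    have c1 : ContinuousOn v (strip n T) := ContDiffOn.continuousOn hv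
    have c2 : ContinuousOn (fun p : EuclideanSpace ℝ (Fin n) × ℝ => φ p.2) (strip n T) := by
      intro p hp
      exact ((hφd p.2 hp.2.1).continuousAt.comp continuousAt_snd).continuousWithinAt
    have c3 : Continuous (fun p : EuclideanSpace ℝ (Fin n) × ℝ => ε * Ψ p.1 p.2) := by
      simp only [hΨ]; fun_prop
    exact (c1.sub c2).sub c3.continuousOn
  -- existence of a global maximum
  obtain ⟨R, hR1, hR2⟩ : ∃ R : ℝ, ‖x₀‖ ≤ R ∧ ∀ r, R < r → B ≤ ε * r ^ 2 := by
    refine ⟨max ‖x₀‖ (max 1 (B / ε)), le_max_left _ _, fun r hr => ?_⟩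
    have h1 : 1 < r := lt_of_le_of_lt ((le_max_left _ _).trans (le_max_right _ _)) hr
    have h2 : B / ε < r := lt_of_le_of_lt ((le_max_right _ _).trans (le_max_right _ _)) hr
    rw [div_lt_iff₀ hε] at h2
    nlinarith [mul_pos hε (by linarith : 0 < r), mul_pos (mul_pos hε (by linarith : 0 < r)) (sub_pos.2 h1)]
  have hcomp : IsCompact ((Metric.closedBall (0 : EuclideanSpace ℝ (Fin n)) R) ×ˢ Set.Icc (0 : ℝ) T) :=
    (isCompact_closedBall _ _).prod isCompact_Icc
  have hx₀ : (x₀, t₀) ∈ (Metric.closedBall (0 : EuclideanSpace ℝ (Fin n)) R) ×ˢ Set.Icc (0 : ℝ) T :=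
    ⟨by simpa using hR1, ht₀⟩
  obtain ⟨⟨x₁, t₁⟩, hp₁, hmax⟩ := hcomp.exists_isMaxOn ⟨_, hx₀⟩
    (hWc.mono (Set.prod_mono (Set.subset_univ _) le_rfl))
  have ht₁ : t₁ ∈ Set.Icc 0 T := hp₁.2
  have hp : (x₁, t₁) ∈ strip n T := ⟨trivial, ht₁⟩
  have hW0 : 0 < W (x₁, t₁) := lt_of_lt_of_le hεlt (hmax hx₀)
  have hmaxg : ∀ x, ∀ t ∈ Set.Icc (0 : ℝ) T, W (x, t) ≤ W (x₁, t₁) := by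
    intro x t ht
    by_cases hx : ‖x‖ ≤ R
    · exact hmax (show (x, t) ∈ _ from ⟨by simpa using hx, ht⟩)
    · push Not at hx
      refine le_trans ?_ hW0.le
      have h1 := hR2 _ hx
      have h2 := hB (x, t) ⟨trivial, ht⟩
      have h3 := hφpos t ht.1
      have h4 : 1 ≤ Real.exp (K * t) := Real.one_le_exp (mul_nonneg hKpos.le ht.1)
      have h5 : ‖x‖ ^ 2 ≤ Ψ x t := by
        simp only [hΨ]; nlinarith [sq_nonneg ‖x‖]
      have h6 := mul_le_mul_of_nonneg_left h5 hε.le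
      simp only [hW]; linarith
  have hvφ : φ t₁ < v (x₁, t₁) := by
    have := mul_pos hε (hΨpos x₁ t₁)
    simp only [hW] at hW0; linarith
  have ht₁pos : 0 < t₁ := by
    rcases ht₁.1.lt_or_eq with h | h
    · exact h
    · exfalso
      rw [← h] at hvφ
      have := hinit x₁
      simp [hφ] at hvφ
      linarith
  -- time derivative
  have hφ1 := hφd t₁ ht₁.1
  set c : ℝ := ε * Real.exp (K * t₁) with hc
  have hcpos : 0 < c := by positivity
  set Q : ℝ := 1 + ‖x₁‖ ^ 2 with hQ
  have htime : 0 ≤ DD (strip n T) (0, 1) v (x₁, t₁) - (-(φ t₁ ^ 2 / n)) - c * K * Q := by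
    have d1 := timeline hv x₁ ht₁
    have d2 : HasDerivAt (fun s => ε * Ψ x₁ s) (c * K * Q) t₁ := by
      have e1 : HasDerivAt (fun s : ℝ => K * s) (K * 1) t₁ := (hasDerivAt_id t₁).const_mul K
      have e2 := ((e1.exp).mul_const Q).const_mul ε
      refine hasDerivAt_val e2 ?_
      simp only [hc]; ring
    have d3 : HasDerivWithinAt (fun s => W (x₁, s))
        (DD (strip n T) (0, 1) v (x₁, t₁) - (-(φ t₁ ^ 2 / n)) - c * K * Q) (Set.Icc 0 T) t₁ :=
      (d1.sub hφ1.hasDerivWithinAt).sub d2.hasDerivWithinAt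
    have hloc : IsLocalMaxOn (fun s => W (x₁, s)) (Set.Icc 0 T) t₁ :=
      IsMaxOn.localize (fun s hs => hmaxg x₁ s hs)
    have hcone : (0 - t₁) ∈ posTangentConeAt (Set.Icc (0 : ℝ) T) t₁ := by
      apply sub_mem_posTangentConeAt_of_segment_subset
      exact (convex_Icc (0 : ℝ) T).segment_subset ht₁ ⟨le_rfl, hT.le⟩
    have := hloc.hasFDerivWithinAt_nonpos d3.hasFDerivWithinAt hcone
    simp at this
    by_contra hneg
    push Not at hneg
    nlinarith
  have hspace : ∀ i, DD (strip n T) (ee i) v (x₁, t₁) = 2 * c * x₁ i ∧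
      DD (strip n T) (ee i) (DD (strip n T) (ee i) v) (x₁, t₁) ≤ 2 * c := by
    intro i
    set w : EuclideanSpace ℝ (Fin n) := EuclideanSpace.single i 1 with hw
    have hnorm : ∀ s : ℝ, ‖x₁ + s • w‖ ^ 2 = ‖x₁‖ ^ 2 + 2 * s * x₁ i + s ^ 2 := by
      intro s
      rw [norm_add_sq_real, inner_smul_right, hw, EuclideanSpace.inner_single_right, norm_smul]
      simp
      ring
    have hq : ∀ s : ℝ, HasDerivAt (fun s : ℝ => c * (1 + (‖x₁‖ ^ 2 + 2 * s * x₁ i + s ^ 2)))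
        (c * (2 * x₁ i + 2 * s)) s := by
      intro s
      have e1 : HasDerivAt (fun s : ℝ => 2 * s * x₁ i) (2 * 1 * x₁ i) s :=
        ((hasDerivAt_id s).const_mul 2).mul_const _
      have e2 : HasDerivAt (fun s : ℝ => s ^ 2) (2 * s) s := by simpa using hasDerivAt_pow 2 s
      have e3 := (((e1.const_add (‖x₁‖ ^ 2)).fun_add e2).const_add 1).const_mul c
      refine hasDerivAt_val e3 ?_
      ring
    have hq2 : HasDerivAt (fun s : ℝ => c * (2 * x₁ i + 2 * s)) (2 * c) 0 := by
      have e3 := (((hasDerivAt_id (0 : ℝ)).const_mul 2).const_add (2 * x₁ i)).const_mul c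
      refine hasDerivAt_val e3 ?_
      ring
    have hs1 := hv.DD (strip_unique hT) (ee i)
    have hl := line hs1 x₁ w ht₁ 0
    have := second_test
      (fun s => v (x₁ + s • w, t₁) - c * (1 + (‖x₁‖ ^ 2 + 2 * s * x₁ i + s ^ 2)))
      (fun s => DD (strip n T) (ee i) v (x₁ + s • w, t₁) - c * (2 * x₁ i + 2 * s))
      _ (fun s => (line hv x₁ w ht₁ s).sub (hq s)) (hl.sub hq2) (by
        intro s
        have := hmaxg (x₁ + s • w) t₁ ht₁
        simp only [hW, hΨ, hnorm, ← mul_assoc, ← hc] at this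
        simp
        linarith)
    simp only [zero_smul, add_zero, mul_zero] at this
    constructor
    · linarith [this.1]
    · linarith [this.2]
  have hfin := hev _ hp
  have hQ1 : 1 ≤ Q := by simp only [hQ]; linarith [sq_nonneg ‖x₁‖]
  have hS1 : - ∑ j, a j (x₁, t₁) * DD (strip n T) (ee j) v (x₁, t₁) ≤ n * (c * M * Q) := by
    rw [← Finset.sum_neg_distrib]
    have : ∀ j ∈ (Finset.univ : Finset (Fin n)),
        -(a j (x₁, t₁) * DD (strip n T) (ee j) v (x₁, t₁)) ≤ c * M * Q := by
      intro j _
      rw [(hspace j).1]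
      have h1 := ha j _ hp
      have h2 : x₁ j ^ 2 ≤ ‖x₁‖ ^ 2 := by
        rw [EuclideanSpace.real_norm_sq_eq]
        exact Finset.single_le_sum (f := fun j => x₁ j ^ 2) (fun j _ => sq_nonneg _)
          (Finset.mem_univ j)
      have h3 : 2 * |x₁ j| ≤ Q := by
        simp only [hQ]
        nlinarith [sq_nonneg (|x₁ j| - 1), sq_abs (x₁ j)]
      have h4 : |a j (x₁, t₁)| * (2 * |x₁ j|) ≤ M * Q :=
        mul_le_mul h1 h3 (by positivity) hM
      have h5 : -(a j (x₁, t₁) * x₁ j) ≤ |a j (x₁, t₁)| * |x₁ j| := by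
        rw [← abs_mul]; exact neg_le_abs _
      nlinarith
    simpa using Finset.sum_le_sum this
  have hS2 : ∑ i, DD (strip n T) (ee i) (DD (strip n T) (ee i) v) (x₁, t₁) ≤ n * (2 * c) := by
    simpa using Finset.sum_le_sum (fun i (_ : i ∈ (Finset.univ : Finset (Fin n))) => (hspace i).2)
  have hS3 := mul_le_mul_of_nonneg_left hS2 hb
  have hS4 : b * (n * (2 * c)) ≤ b * (n * (2 * c)) * Q :=
    le_mul_of_one_le_right (by positivity) hQ1
  have hsq : φ t₁ ^ 2 / n < v (x₁, t₁) ^ 2 / n := by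
    have := hφpos t₁ ht₁.1
    gcongr
  have hcQ : 0 < c * Q := by positivity
  have hKe : c * K * Q = n * (c * M * Q) + b * (n * (2 * c)) * Q + c * Q := by
    simp only [hK]; ring
  linarith

/-- Laplacian estimate for the viscous Hamilton–Jacobi equation: if `Δu(·,0) ≤ C_Lap`,
then `Δu(·,t) ≤ 1/(C_Lap⁻¹ + t/n)` for `t ∈ [0,T]`. -/
theorem stmt_10 (n : ℕ) (hn : 1 ≤ n) (β T : ℝ) (hβ : 0 < β) (hT : 0 < T)
    (u : EuclideanSpace ℝ (Fin n) → ℝ → ℝ)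
    (hsmooth : ContDiffOn ℝ (⊤ : ℕ∞)
      (fun p : EuclideanSpace ℝ (Fin n) × ℝ => u p.1 p.2)
      (Set.univ ×ˢ Set.Icc 0 T))
    (hbdd : ∃ M, ∀ x, ∀ t ∈ Set.Icc (0 : ℝ) T, ∀ i ≤ 4,
      ‖iteratedFDeriv ℝ i (fun y => u y t) x‖ ≤ M)
    (hpde : ∀ x, ∀ t ∈ Set.Icc (0 : ℝ) T,
      HasDerivAt (u x)
        (-(1/2) * ‖gradient (fun y => u y t) x‖ ^ 2
          + (β⁻¹ / 2) * laplacian (fun y => u y t) x) t)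
    (CLap : ℝ) (hCLap : 0 < CLap)
    (hinit : ∀ x, laplacian (fun y => u y 0) x ≤ CLap) :
    ∀ x, ∀ t ∈ Set.Icc (0 : ℝ) T,
      laplacian (fun y => u y t) x ≤ 1 / (CLap⁻¹ + t / n) := by
  obtain ⟨M, hM⟩ := hbdd
  set U : EuclideanSpace ℝ (Fin n) × ℝ → ℝ := fun p => u p.1 p.2 with hUdef
  have hU : Sm (strip n T) U := hsmooth
  have hS := strip_unique (n := n) hT
  have hM0 : 0 ≤ M :=
    (norm_nonneg _).trans (hM 0 0 ⟨le_rfl, hT.le⟩ 0 (by norm_num))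
  have hlap : ∀ x, ∀ t ∈ Set.Icc (0 : ℝ) T, laplacian (fun y => u y t) x =
      ∑ i, DD (strip n T) (ee i) (DD (strip n T) (ee i) U) (x, t) :=
    fun x t ht => lap_eq hT hU x ht
  have hgrad : ∀ x, ∀ t ∈ Set.Icc (0 : ℝ) T, ‖gradient (fun y => u y t) x‖ ^ 2 =
      ∑ i, DD (strip n T) (ee i) U (x, t) * DD (strip n T) (ee i) U (x, t) :=
    fun x t ht => grad_eq hU x ht
  have hv : Sm (strip n T) (fun q => ∑ i, DD (strip n T) (ee i) (DD (strip n T) (ee i) U) q) :=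
    Sm.sum fun i => (hU.DD hS _).DD hS _
  have hpde' : ∀ p ∈ strip n T, DD (strip n T) (0, 1) U p =
      -(1/2) * ∑ j, DD (strip n T) (ee j) U p * DD (strip n T) (ee j) U p
      + (β⁻¹ / 2) * ∑ j, DD (strip n T) (ee j) (DD (strip n T) (ee j) U) p := by
    rintro ⟨x, t⟩ ⟨-, ht⟩
    have h1 := timeline hU x ht
    have h2 := (hpde x t ht).hasDerivWithinAt (s := Set.Icc 0 T)
    rw [hlap x t ht, hgrad x t ht] at h2
    exact ((uniqueDiffOn_Icc hT) t ht).eq_deriv _ h1 h2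
  intro x t ht
  rw [hlap x t ht]
  refine maxprin n hn (β⁻¹ / 2) T M (n * M) CLap (by positivity) hT hM0 hCLap _ hv
    (fun j => DD (strip n T) (ee j) U) ?_ ?_ ?_ ?_ x t ht
  · rintro i ⟨x, t⟩ ⟨-, ht⟩
    rw [← slice_apply hU x ht]
    exact bound1 (hM x t ht 1 (by norm_num)) i
  · rintro ⟨x, t⟩ ⟨-, ht⟩
    rw [← hlap x t ht]
    refine bound2 ?_ (hM x t ht 2 (by norm_num))
    rw [← contDiffOn_univ]
    exact ContDiffOn.comp (g := U) (t := strip n T) hU (f := fun y => (y, t))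
      (by fun_prop) (fun y _ => ⟨trivial, ht⟩)
  · intro p hp
    rw [evol hS (strip_closure hT) hU ee (0, 1) (β⁻¹ / 2) hpde' hp]
    have := cs (fun i j => DD (strip n T) (ee i) (DD (strip n T) (ee j) U) p) hn
    linarith
  · intro x
    have := hinit x
    rwa [hlap x 0 ⟨le_rfl, hT.le⟩] at this
end
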